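/- arXiv:2401.02181 — 2 statements merged into one kernel-verified Lean document; each statement's English description precedes it below -/
import Mathlib

section
/- Let D ⊆ ℝ² be a bounded convex open set, let Γ be a nondegenerate closed line segment contained in the boundary of D, and let ψ : ℝ² → ℝ be a continuous function with ψ ≥ 0 on Γ and ∫_Γ ψ dH¹ > 0, where H¹ is the one-dimensional Hausdorff measure. Then there exists a constant C > 0 such that for every continuously differentiable function w : ℝ² → ℝ, ∫_D |w − e_Γ(w)| dx ≤ C·∫_D |∇w| dx, where e_Γ(w) = (∫_Γ w·ψ dH¹)/(∫_Γ ψ dH¹). -/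
open MeasureTheory

/-! The inequality combines a Poincaré inequality and a trace inequality, both obtained by
integrating `∇w` along segments and changing variables so that no point of `D` is charged too much.

On a bounded convex set, `w x - w y` is estimated by passing through the midpoint of `x` and `y`:
each half of the path moves its starting point by a homothety of ratio at least `1 / 2`, whose
Jacobian is bounded below. Averaging over `y` yields a constant `c` for which the `L¹` norm of
`w - c` is controlled by that of `∇w`.

For the trace on `Γ`, pick `z ∈ D` off the line of `Γ` and go from `x ∈ Γ` half of the way to `z`.
These paths sweep out a truncated triangle inside `D`, away from its apex `z`, where the Jacobian
degenerates; hence the `L¹(Γ)` norm of `w - c` is controlled by the `L¹(D)` norms of `∇w` and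
`w - c`. Since the weighted mean reproduces constants, `c - e_Γ(w)` is at most a multiple of that
`L¹(Γ)` norm. -/

open AffineMap Module Set
open scoped ENNReal NNReal

section WeightedMean

variable {X F : Type*} [MeasurableSpace X] [NormedAddCommGroup F] [NormedSpace ℝ F]

/-- The mean of `w` with respect to `ν` and the real weight `ψ`, which may change sign; the paper's
`e_Γ(w)` is the case where `ν` is `H¹` restricted to `Γ`. It is the junk value `0` when `ψ` has
integral zero. -/
noncomputable def weightedMean (ν : Measure X) (ψ : X → ℝ) (w : X → F) : F :=
  (∫ x, ψ x ∂ν)⁻¹ • ∫ x, ψ x • w x ∂ν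

variable {ν : Measure X} {ψ : X → ℝ} {w : X → F}

theorem sub_weightedMean [CompleteSpace F] (hψ : Integrable ψ ν)
    (hψw : Integrable (fun x => ψ x • w x) ν) (hψ0 : ∫ x, ψ x ∂ν ≠ 0) (c : F) :
    c - weightedMean ν ψ w = weightedMean ν ψ fun x => c - w x := by
  simp only [weightedMean, smul_sub]
  rw [integral_sub (hψ.smul_const c) hψw, integral_smul_const, smul_sub, inv_smul_smul₀ hψ0]

theorem enorm_weightedMean_le (ψ : X → ℝ) (hw : AEStronglyMeasurable w ν) :
    ‖weightedMean ν ψ w‖ₑ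
      ≤ ‖(∫ x, ψ x ∂ν)⁻¹‖ₑ * eLpNorm ψ ∞ ν * ∫⁻ x, ‖w x‖ₑ ∂ν := by
  rw [weightedMean, enorm_smul, mul_assoc]
  gcongr
  calc ‖∫ x, ψ x • w x ∂ν‖ₑ ≤ eLpNorm (ψ • w) 1 ν := by
        rw [eLpNorm_one_eq_lintegral_enorm]
        exact enorm_integral_le_lintegral_enorm _
    _ ≤ eLpNorm ψ ∞ ν * eLpNorm w 1 ν := eLpNorm_smul_le_eLpNorm_top_mul_eLpNorm 1 hw ψ
    _ = eLpNorm ψ ∞ ν * ∫⁻ x, ‖w x‖ₑ ∂ν := by rw [eLpNorm_one_eq_lintegral_enorm]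

theorem enorm_sub_weightedMean_le [CompleteSpace F] [IsFiniteMeasure ν] (hψ : MemLp ψ ∞ ν)
    (hψ0 : ∫ x, ψ x ∂ν ≠ 0) (hw : Integrable w ν) (c : F) :
    ‖c - weightedMean ν ψ w‖ₑ
      ≤ ‖(∫ x, ψ x ∂ν)⁻¹‖ₑ * eLpNorm ψ ∞ ν * ∫⁻ x, ‖w x - c‖ₑ ∂ν := by
  rw [sub_weightedMean (hψ.integrable le_top) (hw.smul_of_top_right hψ) hψ0]
  simp only [enorm_sub_rev _ c]
  exact enorm_weightedMean_le ψ (aestronglyMeasurable_const.sub hw.1)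

end WeightedMean

section FundamentalTheorem

variable {E F : Type*} [NormedAddCommGroup E] [NormedSpace ℝ E]
  [NormedAddCommGroup F] [NormedSpace ℝ F] {w : E → F}

theorem enorm_lineMap_sub_le_lintegral_fderiv (hw : ContDiff ℝ 1 w) (x y : E) {t : ℝ}
    (ht : 0 ≤ t) :
    ‖w (lineMap x y t) - w x‖ₑ
      ≤ (∫⁻ τ in Ioc 0 t, ‖fderiv ℝ w (lineMap x y τ)‖ₑ) * edist x y := by
  have hderiv (τ : ℝ) :
      deriv (fun τ : ℝ => w (lineMap x y τ)) τ = fderiv ℝ w (lineMap x y τ) (y - x) :=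
    ((hw.differentiable one_ne_zero _).hasFDerivAt.comp_hasDerivAt τ hasDerivAt_lineMap).deriv
  have hcomp : ContDiff ℝ 1 fun τ : ℝ => w (lineMap x y τ) :=
    hw.comp (contDiff_lineMap x y)
  calc ‖w (lineMap x y t) - w x‖ₑ
      = ‖w (lineMap x y t) - w (lineMap x y (0 : ℝ))‖ₑ := by rw [lineMap_apply_zero]
    _ ≤ ∫⁻ τ in Icc 0 t, ‖deriv (fun τ : ℝ => w (lineMap x y τ)) τ‖ₑ :=
        enorm_sub_le_lintegral_deriv_of_contDiffOn_Icc hcomp.contDiffOn ht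
    _ ≤ ∫⁻ τ in Ioc 0 t, ‖fderiv ℝ w (lineMap x y τ)‖ₑ * edist x y := by
        rw [← restrict_Ioc_eq_restrict_Icc]
        refine lintegral_mono fun τ => ?_
        rw [hderiv, edist_comm, edist_eq_enorm_sub]
        exact ContinuousLinearMap.le_opENorm _ _
    _ = (∫⁻ τ in Ioc 0 t, ‖fderiv ℝ w (lineMap x y τ)‖ₑ) * edist x y :=
        lintegral_mul_const' _ _ (edist_ne_top x y)

theorem enorm_sub_le_lintegral_fderiv_add_setLAverage (hw : ContDiff ℝ 1 w) (x y : E) (c : F)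
    {t : ℝ} (ht : 0 < t) :
    ‖w x - c‖ₑ ≤ (∫⁻ τ in Ioc 0 t, ‖fderiv ℝ w (lineMap x y τ)‖ₑ) * edist x y
      + ⨍⁻ τ in Ioc 0 t, ‖w (lineMap x y τ) - c‖ₑ ∂volume := by
  have hcont : Continuous fun τ : ℝ => ‖w (lineMap x y τ) - c‖ₑ :=
    ((hw.continuous.comp lineMap_continuous).sub continuous_const).enorm
  obtain ⟨τ, hτ, hle⟩ := exists_le_setLAverage (μ := volume) (s := Ioc 0 t)
    (by simpa using ht) (by simp) hcont.measurable.aemeasurable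
  calc ‖w x - c‖ₑ ≤ ‖w (lineMap x y τ) - w x‖ₑ + ‖w (lineMap x y τ) - c‖ₑ := by
        simp only [← edist_eq_enorm_sub]
        exact edist_triangle_left _ _ _
    _ ≤ _ := by
        refine add_le_add ((enorm_lineMap_sub_le_lintegral_fderiv hw x y hτ.1.le).trans ?_) hle
        gcongr
        exact hτ.2

end FundamentalTheorem

section Poincare

variable {E F : Type*} [NormedAddCommGroup E] [NormedSpace ℝ E] [FiniteDimensional ℝ E]
  [MeasurableSpace E] [BorelSpace E] [NormedAddCommGroup F] [NormedSpace ℝ F]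
  (μ : Measure E) [μ.IsAddHaarMeasure] {D : Set E}

theorem lintegral_comp_add_smul {f : E → ℝ≥0∞} (hf : Measurable f) (a : E) {r : ℝ} (hr : r ≠ 0) :
    ∫⁻ x, f (a + r • x) ∂μ = ENNReal.ofReal |(r ^ finrank ℝ E)⁻¹| * ∫⁻ x, f x ∂μ := by
  rw [← lintegral_map (f := fun x => f (a + x)) (by fun_prop) (measurable_const_smul r),
    Measure.map_addHaar_smul μ hr, lintegral_smul_measure, lintegral_add_left_eq_self f a,
    smul_eq_mul]

theorem lintegral_comp_add_smul_le {f : E → ℝ≥0∞} (hf : Measurable f) (a : E) {r : ℝ}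
    (hr : 1 / 2 ≤ r) :
    ∫⁻ x, f (a + r • x) ∂μ ≤ 2 ^ finrank ℝ E * ∫⁻ x, f x ∂μ := by
  have hr0 : 0 < r := by linarith
  rw [lintegral_comp_add_smul μ hf a hr0.ne', abs_of_pos (by positivity), ← inv_pow,
    ENNReal.ofReal_pow (by positivity)]
  gcongr
  rw [← ENNReal.ofReal_ofNat 2]
  gcongr
  exact inv_le_of_inv_le₀ two_pos (by simpa using hr)

theorem setLIntegral_comp_lineMap_le (hD : MeasurableSet D) (hDc : Convex ℝ D)
    {f : E → ℝ≥0∞} (hf : Measurable f) {x : E} (hx : x ∈ D) {t : ℝ} (ht0 : 0 ≤ t)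
    (ht : t ≤ 1 / 2) :
    ∫⁻ y in D, f (lineMap y x t) ∂μ ≤ 2 ^ finrank ℝ E * ∫⁻ y in D, f y ∂μ := by
  calc ∫⁻ y in D, f (lineMap y x t) ∂μ
      ≤ ∫⁻ y in D, D.indicator f (t • x + (1 - t) • y) ∂μ := by
        refine setLIntegral_mono' hD fun y hy => ?_
        rw [add_comm, ← lineMap_apply_module,
          indicator_of_mem (hDc.lineMap_mem hy hx ⟨ht0, by linarith⟩)]
    _ ≤ ∫⁻ y, D.indicator f (t • x + (1 - t) • y) ∂μ := setLIntegral_le_lintegral _ _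
    _ ≤ 2 ^ finrank ℝ E * ∫⁻ y, D.indicator f y ∂μ :=
        lintegral_comp_add_smul_le μ (hf.indicator hD) _ (by linarith)
    _ = 2 ^ finrank ℝ E * ∫⁻ y in D, f y ∂μ := by rw [lintegral_indicator hD]

variable {w : E → F}

theorem setLIntegral_enorm_midpoint_sub_le (hD : MeasurableSet D) (hDc : Convex ℝ D)
    (hw : ContDiff ℝ 1 w) {x : E} (hx : x ∈ D) :
    ∫⁻ y in D, ‖w (midpoint ℝ y x) - w y‖ₑ ∂μ
      ≤ 2 ^ finrank ℝ E * Metric.ediam D * ∫⁻ y in D, ‖fderiv ℝ w y‖ₑ ∂μ := by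
  have hdw : Measurable fun y => ‖fderiv ℝ w y‖ₑ :=
    (hw.continuous_fderiv one_ne_zero).enorm.measurable
  have hmeas : Measurable fun z : E × ℝ => ‖fderiv ℝ w (lineMap z.1 x z.2)‖ₑ :=
    hdw.comp (by fun_prop)
  calc ∫⁻ y in D, ‖w (midpoint ℝ y x) - w y‖ₑ ∂μ
      ≤ ∫⁻ y in D, (∫⁻ t in Ioc 0 (⅟2 : ℝ), ‖fderiv ℝ w (lineMap y x t)‖ₑ) * Metric.ediam D ∂μ := by
        refine setLIntegral_mono' hD fun y hy => ?_
        refine (enorm_lineMap_sub_le_lintegral_fderiv hw y x (by norm_num)).trans ?_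
        gcongr
        exact Metric.edist_le_ediam_of_mem hy hx
    _ = (∫⁻ t in Ioc 0 (⅟2 : ℝ), ∫⁻ y in D, ‖fderiv ℝ w (lineMap y x t)‖ₑ ∂μ)
          * Metric.ediam D := by
        rw [lintegral_mul_const _ hmeas.lintegral_prod_right',
          lintegral_lintegral_swap hmeas.aemeasurable]
    _ ≤ (∫⁻ _ in Ioc 0 (⅟2 : ℝ), 2 ^ finrank ℝ E * ∫⁻ y in D, ‖fderiv ℝ w y‖ₑ ∂μ)
          * Metric.ediam D := by
        gcongr ?_ * _
        refine setLIntegral_mono' measurableSet_Ioc fun t ht => ?_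
        exact setLIntegral_comp_lineMap_le μ hD hDc hdw hx ht.1.le (by simpa using ht.2)
    _ ≤ 2 ^ finrank ℝ E * (∫⁻ y in D, ‖fderiv ℝ w y‖ₑ ∂μ) * 1 * Metric.ediam D := by
        rw [setLIntegral_const]
        gcongr
        simp
    _ = _ := by ring

theorem setLIntegral_setLIntegral_enorm_sub_le (hD : MeasurableSet D) (hDc : Convex ℝ D)
    (hw : ContDiff ℝ 1 w) :
    ∫⁻ x in D, ∫⁻ y in D, ‖w y - w x‖ₑ ∂μ ∂μ
      ≤ 2 ^ (finrank ℝ E + 1) * Metric.ediam D * (∫⁻ x in D, ‖fderiv ℝ w x‖ₑ ∂μ) * μ D := by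
  set δ : E → E → ℝ≥0∞ := fun x y => ‖w (midpoint ℝ y x) - w y‖ₑ with hδ
  have hwc := hw.continuous
  have hmeas : Measurable fun z : E × E => δ z.1 z.2 := by
    have hmid : Continuous fun z : E × E => midpoint ℝ z.2 z.1 := by
      unfold midpoint
      fun_prop
    exact ((hwc.comp hmid).sub (hwc.comp continuous_snd)).enorm.measurable
  have htriangle (x y : E) : ‖w y - w x‖ₑ ≤ δ x y + δ y x := by
    simp only [hδ, midpoint_comm x y, ← edist_eq_enorm_sub]
    exact edist_triangle_left _ _ _
  calc ∫⁻ x in D, ∫⁻ y in D, ‖w y - w x‖ₑ ∂μ ∂μ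
      ≤ ∫⁻ x in D, ∫⁻ y in D, (δ x y + δ y x) ∂μ ∂μ :=
        lintegral_mono fun x => lintegral_mono (htriangle x)
    _ = ∫⁻ x in D, ∫⁻ y in D, δ x y ∂μ ∂μ + ∫⁻ x in D, ∫⁻ y in D, δ y x ∂μ ∂μ := by
        rw [← lintegral_add_left hmeas.lintegral_prod_right']
        exact lintegral_congr fun x => lintegral_add_left (hmeas.comp measurable_prodMk_left) _
    _ = 2 * ∫⁻ x in D, ∫⁻ y in D, δ x y ∂μ ∂μ := by
        rw [lintegral_lintegral_swap (f := fun x y => δ y x)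
          (hmeas.comp measurable_swap).aemeasurable, two_mul]
    _ ≤ 2 * ∫⁻ _ in D, 2 ^ finrank ℝ E * Metric.ediam D * ∫⁻ y in D, ‖fderiv ℝ w y‖ₑ ∂μ ∂μ := by
        gcongr 2 * ?_
        exact setLIntegral_mono' hD fun x hx => setLIntegral_enorm_midpoint_sub_le μ hD hDc hw hx
    _ = _ := by
        rw [setLIntegral_const]
        ring

theorem exists_setLIntegral_enorm_sub_le (hD : MeasurableSet D) (hDc : Convex ℝ D)
    (hDb : Bornology.IsBounded D) (hw : ContDiff ℝ 1 w) :
    ∃ c : F, ∫⁻ x in D, ‖w x - c‖ₑ ∂μ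
      ≤ 2 ^ (finrank ℝ E + 1) * Metric.ediam D * ∫⁻ x in D, ‖fderiv ℝ w x‖ₑ ∂μ := by
  have hμt : μ D ≠ ∞ := hDb.measure_lt_top.ne
  rcases eq_or_ne (μ D) 0 with hμ0 | hμ0
  · exact ⟨0, by simp [Measure.restrict_eq_zero.2 hμ0]⟩
  have hwc := hw.continuous
  have hmeas : Measurable fun z : E × E => ‖w z.2 - w z.1‖ₑ :=
    (by fun_prop : Continuous fun z : E × E => ‖w z.2 - w z.1‖ₑ).measurable
  obtain ⟨y, -, hy⟩ := exists_le_setLAverage (f := fun y => ∫⁻ x in D, ‖w x - w y‖ₑ ∂μ)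
    hμ0 hμt hmeas.lintegral_prod_right'.aemeasurable
  refine ⟨w y, hy.trans ?_⟩
  rw [setLAverage_eq]
  exact ENNReal.div_le_of_le_mul (setLIntegral_setLIntegral_enorm_sub_le μ hD hDc hw)

end Poincare

section Segment

theorem isCompact_segment {E : Type*} [AddCommGroup E] [Module ℝ E] [TopologicalSpace E]
    [IsTopologicalAddGroup E] [ContinuousSMul ℝ E] (p q : E) : IsCompact (segment ℝ p q) := by
  rw [← convexHull_pair]
  exact (toFinite {p, q}).isCompact_convexHull ℝ

theorem memLp_top_restrict_of_isCompact {X F : Type*} [TopologicalSpace X] [MeasurableSpace X]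
    [OpensMeasurableSpace X] [TopologicalSpace.PseudoMetrizableSpace X] [NormedAddCommGroup F]
    {f : X → F} {K : Set X} (hf : ContinuousOn f K) (hK : IsCompact K) (hKm : MeasurableSet K)
    (μ : Measure X) :
    MemLp f ∞ (μ.restrict K) := by
  obtain ⟨M, hM⟩ := hK.exists_bound_of_continuousOn hf
  exact memLp_top_of_bound (hf.aestronglyMeasurable_of_isCompact hK hKm) M
    (ae_restrict_of_forall_mem hKm hM)

theorem memLp_top_restrict_segment {E F : Type*} [NormedAddCommGroup E] [NormedSpace ℝ E]
    [MeasurableSpace E] [BorelSpace E] [NormedAddCommGroup F] {f : E → F} {p q : E}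
    (hf : ContinuousOn f (segment ℝ p q)) (μ : Measure E) :
    MemLp f ∞ (μ.restrict (segment ℝ p q)) := by
  have hc := isCompact_segment p q
  exact memLp_top_restrict_of_isCompact hf hc hc.measurableSet μ

theorem hausdorffMeasure_restrict_segment {E : Type*} [NormedAddCommGroup E] [NormedSpace ℝ E]
    [MeasurableSpace E] [BorelSpace E] (p q : E) :
    (μH[1] : Measure E).restrict (segment ℝ p q) =
      nndist p q • (volume.restrict (Icc (0 : ℝ) 1)).map (lineMap p q) := by
  have hline : Measurable (lineMap p q : ℝ → E) := lineMap_continuous.measurable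
  ext A hA
  rw [Measure.restrict_apply hA, segment_eq_image_lineMap, ← image_preimage_inter,
    hausdorffMeasure_lineMap_image, hausdorffMeasure_real, Measure.smul_apply,
    Measure.map_apply hline hA, Measure.restrict_apply (hline hA)]

theorem measurable_setLIntegral_lineMap {E : Type*} [NormedAddCommGroup E] [NormedSpace ℝ E]
    [MeasurableSpace E] [BorelSpace E] {f : E → ℝ≥0∞} (hf : Measurable f) (z : E) (T : Set ℝ) :
    Measurable fun x => ∫⁻ t in T, f (lineMap x z t) :=
  (hf.comp (by fun_prop : Measurable fun y : E × ℝ => lineMap y.1 z y.2)).lintegral_prod_right'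

theorem setLIntegral_comp_lineMap_lineMap_le {E : Type*} [NormedAddCommGroup E] [NormedSpace ℝ E]
    [MeasurableSpace E] [BorelSpace E] {f : E → ℝ≥0∞} (hf : Measurable f) (p q z : E) {t : ℝ}
    (ht : t ≤ 1 / 2) :
    ∫⁻ s in Icc (0 : ℝ) 1, f (lineMap (lineMap p q s) z t)
      ≤ 2 * ∫⁻ r : ℝ, f (p + (t • (z - p) + r • (q - p))) := by
  have hpoint (s : ℝ) : lineMap (lineMap p q s) z t
      = p + (t • (z - p) + (0 + (1 - t) • s) • (q - p)) := by
    simp only [lineMap_apply_module', smul_eq_mul]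
    module
  refine (setLIntegral_le_lintegral _ _).trans ?_
  simp only [hpoint]
  simpa only [finrank_self, pow_one] using lintegral_comp_add_smul_le volume
    (f := fun r : ℝ => f (p + (t • (z - p) + r • (q - p)))) (by fun_prop) 0
    (by linarith : 1 / 2 ≤ 1 - t)

end Segment

section Plane

variable {E F : Type*} [NormedAddCommGroup E] [NormedSpace ℝ E]
  [NormedAddCommGroup F] [NormedSpace ℝ F]

theorem not_collinear_of_isOpen (hE : 1 < finrank ℝ E) {D : Set E} (hD : IsOpen D)
    (hne : D.Nonempty) : ¬ Collinear ℝ D := fun hcol => by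
  have := finite_of_finrank_pos (zero_lt_one.trans hE)
  have h := hcol.finrank_le_one
  rw [← direction_affineSpan, hD.affineSpan_eq_top hne, AffineSubspace.direction_top,
    finrank_top] at h
  omega

theorem exists_linearIndependent_sub_of_isOpen (hE : 1 < finrank ℝ E) {D : Set E} (hD : IsOpen D)
    (hne : D.Nonempty) {p q : E} (hpq : p ≠ q) :
    ∃ z ∈ D, LinearIndependent ℝ ![z - p, q - p] := by
  by_contra! h
  refine not_collinear_of_isOpen hE hD hne
    ((collinear_iff_exists_forall_eq_smul_vadd D).2 ⟨p, q - p, fun z hz => ?_⟩)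
  have hdep := h z hz
  rw [LinearIndependent.pair_symm_iff, LinearIndependent.pair_iff' (sub_ne_zero.2 hpq.symm)] at hdep
  push Not at hdep
  obtain ⟨r, hr⟩ := hdep
  exact ⟨r, by rw [hr, vadd_eq_add, sub_add_cancel]⟩

variable [FiniteDimensional ℝ E] [MeasurableSpace E] [BorelSpace E]
  (μ : Measure E) [μ.IsAddHaarMeasure]

theorem exists_lintegral_comp_continuousLinearEquiv_eq {G : Type*} [NormedAddCommGroup G]
    [NormedSpace ℝ G] [MeasurableSpace G] [BorelSpace G] (ν : Measure G) [ν.IsAddHaarMeasure]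
    (L : G ≃L[ℝ] E) :
    ∃ K : ℝ≥0, ∀ f : E → ℝ≥0∞, Measurable f → ∫⁻ z, f (L z) ∂ν = K * ∫⁻ x, f x ∂μ := by
  have := L.isAddHaarMeasure_map ν
  obtain ⟨K, hK⟩ : ∃ K : ℝ≥0, ν.map L = K • μ := ⟨_, Measure.isAddLeftInvariant_eq_smul _ μ⟩
  refine ⟨K, fun f hf => ?_⟩
  rw [← lintegral_map hf L.continuous.measurable, hK, lintegral_smul_measure,
    ENNReal.smul_def, smul_eq_mul]

theorem exists_lintegral_lintegral_add_smul_eq (hE : finrank ℝ E = 2) {u v : E}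
    (huv : LinearIndependent ℝ ![u, v]) :
    ∃ K : ℝ≥0, ∀ f : E → ℝ≥0∞, Measurable f → ∀ a : E,
      ∫⁻ s : ℝ, ∫⁻ t : ℝ, f (a + (s • u + t • v)) = K * ∫⁻ x, f x ∂μ := by
  let b := basisOfLinearIndependentOfCardEqFinrank huv (by simp [hE])
  let L : (ℝ × ℝ) ≃L[ℝ] E :=
    ((LinearEquiv.finTwoArrow ℝ ℝ).symm ≪≫ₗ b.equivFun.symm).toContinuousLinearEquiv
  have hL (s t : ℝ) : L (s, t) = s • u + t • v := by
    simp [L, b, Basis.equivFun_symm_apply]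
  obtain ⟨K, hK⟩ := exists_lintegral_comp_continuousLinearEquiv_eq μ volume L
  refine ⟨K, fun f hf a => ?_⟩
  rw [← lintegral_add_left_eq_self f a, ← hK (fun x => f (a + x)) (by fun_prop),
    Measure.volume_eq_prod, lintegral_prod _ (by fun_prop)]
  simp only [hL]

theorem exists_setLIntegral_segment_lineMap_le (hE : finrank ℝ E = 2) {p q z : E}
    (hz : LinearIndependent ℝ ![z - p, q - p]) :
    ∃ K : ℝ≥0, ∀ f : E → ℝ≥0∞, Measurable f →
      ∫⁻ x in segment ℝ p q, (∫⁻ t in Ioc (0 : ℝ) (1 / 2), f (lineMap x z t)) ∂μH[1]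
        ≤ K * ∫⁻ x, f x ∂μ := by
  obtain ⟨K, hK⟩ := exists_lintegral_lintegral_add_smul_eq μ hE hz
  refine ⟨nndist p q * (2 * K), fun f hf => ?_⟩
  have hmeas : Measurable fun y : ℝ × ℝ => f (lineMap (lineMap p q y.1) z y.2) :=
    hf.comp (by fun_prop)
  calc ∫⁻ x in segment ℝ p q, (∫⁻ t in Ioc (0 : ℝ) (1 / 2), f (lineMap x z t)) ∂μH[1]
      = nndist p q * ∫⁻ s in Icc (0 : ℝ) 1, ∫⁻ t in Ioc (0 : ℝ) (1 / 2),
          f (lineMap (lineMap p q s) z t) := by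
        rw [hausdorffMeasure_restrict_segment, lintegral_smul_measure,
          lintegral_map (measurable_setLIntegral_lineMap hf z _) lineMap_continuous.measurable,
          ENNReal.smul_def, smul_eq_mul]
    _ = nndist p q * ∫⁻ t in Ioc (0 : ℝ) (1 / 2), ∫⁻ s in Icc (0 : ℝ) 1,
          f (lineMap (lineMap p q s) z t) := by
        rw [lintegral_lintegral_swap hmeas.aemeasurable]
    _ ≤ nndist p q * ∫⁻ t in Ioc (0 : ℝ) (1 / 2),
          2 * ∫⁻ r : ℝ, f (p + (t • (z - p) + r • (q - p))) := by
        gcongr _ * ?_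
        exact setLIntegral_mono' measurableSet_Ioc fun t ht =>
          setLIntegral_comp_lineMap_lineMap_le hf p q z ht.2
    _ ≤ nndist p q * ∫⁻ t : ℝ, 2 * ∫⁻ r : ℝ, f (p + (t • (z - p) + r • (q - p))) := by
        gcongr _ * ?_
        exact setLIntegral_le_lintegral _ _
    _ = ↑(nndist p q * (2 * K)) * ∫⁻ x, f x ∂μ := by
        rw [lintegral_const_mul' _ _ ENNReal.ofNat_ne_top, hK f hf]
        push_cast
        ring

theorem exists_setLIntegral_segment_lineMap_le_setLIntegral (hE : finrank ℝ E = 2) {D : Set E}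
    (hD : MeasurableSet D) {p q z : E} (hz : LinearIndependent ℝ ![z - p, q - p])
    (hcone : ∀ x ∈ segment ℝ p q, ∀ t ∈ Ioc (0 : ℝ) (1 / 2), lineMap x z t ∈ D) :
    ∃ K : ℝ≥0, ∀ f : E → ℝ≥0∞, Measurable f →
      ∫⁻ x in segment ℝ p q, (∫⁻ t in Ioc (0 : ℝ) (1 / 2), f (lineMap x z t)) ∂μH[1]
        ≤ K * ∫⁻ x in D, f x ∂μ := by
  obtain ⟨K, hK⟩ := exists_setLIntegral_segment_lineMap_le μ hE hz
  refine ⟨K, fun f hf => ?_⟩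
  rw [← lintegral_indicator hD]
  refine le_trans ?_ (hK _ (hf.indicator hD))
  refine setLIntegral_mono' (isCompact_segment p q).measurableSet fun x hx =>
    setLIntegral_mono' measurableSet_Ioc fun t ht => ?_
  rw [indicator_of_mem (hcone x hx t ht)]

theorem exists_setLIntegral_segment_enorm_sub_le_of_lineMap_mem (hE : finrank ℝ E = 2)
    {D : Set E} (hD : MeasurableSet D) {p q z : E} (hz : LinearIndependent ℝ ![z - p, q - p])
    (hcone : ∀ x ∈ segment ℝ p q, ∀ t ∈ Ioc (0 : ℝ) (1 / 2), lineMap x z t ∈ D) :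
    ∃ K : ℝ≥0, ∀ w : E → F, ContDiff ℝ 1 w → ∀ c : F,
      ∫⁻ x in segment ℝ p q, ‖w x - c‖ₑ ∂μH[1]
        ≤ K * (∫⁻ x in D, ‖fderiv ℝ w x‖ₑ ∂μ + ∫⁻ x in D, ‖w x - c‖ₑ ∂μ) := by
  obtain ⟨K, hK⟩ := exists_setLIntegral_segment_lineMap_le_setLIntegral μ hE hD hz hcone
  set R : ℝ≥0 := max (nndist p z) (nndist q z)
  have hR {x : E} (hx : x ∈ segment ℝ p q) : edist x z ≤ R := by
    rw [edist_nndist]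
    exact_mod_cast (convexOn_dist z convex_univ).le_max_of_mem_segment (mem_univ p) (mem_univ q) hx
  refine ⟨K * (R + 2), fun w hw c => ?_⟩
  have hwc := hw.continuous
  have hdw : Measurable fun x => ‖fderiv ℝ w x‖ₑ :=
    (hw.continuous_fderiv one_ne_zero).enorm.measurable
  have hwm : Measurable fun x => ‖w x - c‖ₑ := (hwc.sub continuous_const).enorm.measurable
  calc ∫⁻ x in segment ℝ p q, ‖w x - c‖ₑ ∂μH[1]
      ≤ ∫⁻ x in segment ℝ p q, ((∫⁻ t in Ioc (0 : ℝ) (1 / 2), ‖fderiv ℝ w (lineMap x z t)‖ₑ) * R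
          + (∫⁻ t in Ioc (0 : ℝ) (1 / 2), ‖w (lineMap x z t) - c‖ₑ) * 2) ∂μH[1] := by
        refine setLIntegral_mono' (isCompact_segment p q).measurableSet fun x hx =>
          (enorm_sub_le_lintegral_fderiv_add_setLAverage hw x z c one_half_pos).trans ?_
        gcongr
        · exact hR hx
        · simp [setLAverage_eq, div_eq_mul_inv]
    _ = (∫⁻ x in segment ℝ p q,
            (∫⁻ t in Ioc (0 : ℝ) (1 / 2), ‖fderiv ℝ w (lineMap x z t)‖ₑ) ∂μH[1]) * R
          + (∫⁻ x in segment ℝ p q,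
            (∫⁻ t in Ioc (0 : ℝ) (1 / 2), ‖w (lineMap x z t) - c‖ₑ) ∂μH[1]) * 2 := by
        have hdwm := measurable_setLIntegral_lineMap hdw z (Ioc 0 (1 / 2))
        rw [lintegral_add_left (hdwm.mul_const _), lintegral_mul_const _ hdwm,
          lintegral_mul_const _ (measurable_setLIntegral_lineMap hwm z _)]
    _ ≤ K * (∫⁻ x in D, ‖fderiv ℝ w x‖ₑ ∂μ) * (R + 2)
          + K * (∫⁻ x in D, ‖w x - c‖ₑ ∂μ) * (R + 2) := by
        gcongr
        · exact hK _ hdw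
        · exact le_self_add
        · exact hK _ hwm
        · exact le_add_self
    _ = _ := by
        push_cast
        ring

theorem exists_setLIntegral_segment_enorm_sub_le (hE : finrank ℝ E = 2) {D : Set E}
    (hDo : IsOpen D) (hDc : Convex ℝ D) {p q : E} (hpq : p ≠ q) (hΓ : segment ℝ p q ⊆ closure D) :
    ∃ K : ℝ≥0, ∀ w : E → F, ContDiff ℝ 1 w → ∀ c : F,
      ∫⁻ x in segment ℝ p q, ‖w x - c‖ₑ ∂μH[1]
        ≤ K * (∫⁻ x in D, ‖fderiv ℝ w x‖ₑ ∂μ + ∫⁻ x in D, ‖w x - c‖ₑ ∂μ) := by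
  obtain ⟨z, hzD, hz⟩ := exists_linearIndependent_sub_of_isOpen (by omega) hDo
    (closure_nonempty_iff.1 ⟨p, hΓ (left_mem_segment ℝ p q)⟩) hpq
  refine exists_setLIntegral_segment_enorm_sub_le_of_lineMap_mem μ hE hDo.measurableSet hz
    fun x hx t ht => ?_
  rw [← hDo.interior_eq] at hzD ⊢
  exact hDc.openSegment_closure_interior_subset_interior (hΓ hx) hzD
    (lineMap_mem_openSegment ℝ x z ⟨ht.1, by linarith [ht.2]⟩)

theorem exists_setLIntegral_enorm_sub_weightedMean_le [CompleteSpace F] (hE : finrank ℝ E = 2)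
    {D : Set E} (hDo : IsOpen D) (hDb : Bornology.IsBounded D) (hDc : Convex ℝ D) {p q : E}
    (hΓ : segment ℝ p q ⊆ closure D) {ψ : E → ℝ} (hψ : MemLp ψ ∞ (μH[1].restrict (segment ℝ p q)))
    (hψ0 : ∫ x in segment ℝ p q, ψ x ∂μH[1] ≠ 0) :
    ∃ K : ℝ≥0∞, K ≠ ∞ ∧ ∀ w : E → F, ContDiff ℝ 1 w →
      ∫⁻ x in D, ‖w x - weightedMean (μH[1].restrict (segment ℝ p q)) ψ w‖ₑ ∂μ
        ≤ K * ∫⁻ x in D, ‖fderiv ℝ w x‖ₑ ∂μ := by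
  have hpq : p ≠ q := by
    rintro rfl
    have := Measure.nullSingletonClass_hausdorff E one_pos
    simp at hψ0
  set ν : Measure E := μH[1].restrict (segment ℝ p q)
  have : IsFiniteMeasure ν := ⟨by simp [ν, edist_lt_top]⟩
  obtain ⟨T, hT⟩ := exists_setLIntegral_segment_enorm_sub_le (F := F) μ hE hDo hDc hpq hΓ
  set P : ℝ≥0∞ := 2 ^ (finrank ℝ E + 1) * Metric.ediam D
  set A : ℝ≥0∞ := ‖(∫ x, ψ x ∂ν)⁻¹‖ₑ * eLpNorm ψ ∞ ν
  refine ⟨P + A * (T * (1 + P)) * μ D, ?_, fun w hw => ?_⟩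
  · have hP : P ≠ ∞ := ENNReal.mul_ne_top (by simp) hDb.ediam_ne_top
    have hA : A ≠ ∞ := ENNReal.mul_ne_top enorm_ne_top hψ.2.ne
    have hD : μ D ≠ ∞ := hDb.measure_lt_top.ne
    finiteness
  obtain ⟨c, hc⟩ := exists_setLIntegral_enorm_sub_le μ hDo.measurableSet hDc hDb hw
  have hmean : ‖c - weightedMean ν ψ w‖ₑ
      ≤ A * (T * ((1 + P) * ∫⁻ x in D, ‖fderiv ℝ w x‖ₑ ∂μ)) := by
    have hwΓ : Integrable w ν :=
      (memLp_top_restrict_segment hw.continuous.continuousOn _).integrable le_top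
    refine (enorm_sub_weightedMean_le hψ hψ0 hwΓ c).trans ?_
    gcongr
    refine (hT w hw c).trans ?_
    rw [add_mul, one_mul]
    gcongr
  calc ∫⁻ x in D, ‖w x - weightedMean ν ψ w‖ₑ ∂μ
      ≤ ∫⁻ x in D, (‖w x - c‖ₑ + ‖c - weightedMean ν ψ w‖ₑ) ∂μ := by
        refine lintegral_mono fun x => ?_
        simp only [← edist_eq_enorm_sub]
        exact edist_triangle _ _ _
    _ = ∫⁻ x in D, ‖w x - c‖ₑ ∂μ + ‖c - weightedMean ν ψ w‖ₑ * μ D := by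
        rw [lintegral_add_right _ measurable_const, setLIntegral_const]
    _ ≤ P * ∫⁻ x in D, ‖fderiv ℝ w x‖ₑ ∂μ
          + A * (T * ((1 + P) * ∫⁻ x in D, ‖fderiv ℝ w x‖ₑ ∂μ)) * μ D := by gcongr
    _ = _ := by ring

theorem boundary_weighted_poincare_L1_general [CompleteSpace F] (hE : finrank ℝ E = 2)
    {D : Set E} (hDo : IsOpen D) (hDb : Bornology.IsBounded D) (hDc : Convex ℝ D) {p q : E}
    (hΓ : segment ℝ p q ⊆ closure D) {ψ : E → ℝ} (hψ : MemLp ψ ∞ (μH[1].restrict (segment ℝ p q)))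
    (hψ0 : ∫ x in segment ℝ p q, ψ x ∂μH[1] ≠ 0) :
    ∃ C > 0, ∀ w : E → F, ContDiff ℝ 1 w →
      ∫ x in D, ‖w x - weightedMean (μH[1].restrict (segment ℝ p q)) ψ w‖ ∂μ
        ≤ C * ∫ x in D, ‖fderiv ℝ w x‖ ∂μ := by
  obtain ⟨K, hK, hKw⟩ :=
    exists_setLIntegral_enorm_sub_weightedMean_le (F := F) μ hE hDo hDb hDc hΓ hψ hψ0
  refine ⟨K.toReal + 1, by positivity, fun w hw => ?_⟩
  have hwc := hw.continuous
  have hdw := hw.continuous_fderiv one_ne_zero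
  have hfin : ∫⁻ x in D, ‖fderiv ℝ w x‖ₑ ∂μ ≠ ∞ :=
    ((hdw.continuousOn.integrableOn_compact hDb.isCompact_closure).mono_set
      subset_closure).hasFiniteIntegral.ne
  rw [integral_norm_eq_lintegral_enorm (by fun_prop),
    integral_norm_eq_lintegral_enorm hdw.aestronglyMeasurable]
  calc _ ≤ (K * ∫⁻ x in D, ‖fderiv ℝ w x‖ₑ ∂μ).toReal :=
        ENNReal.toReal_mono (ENNReal.mul_ne_top hK hfin) (hKw w hw)
    _ = K.toReal * (∫⁻ x in D, ‖fderiv ℝ w x‖ₑ ∂μ).toReal := ENNReal.toReal_mul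
    _ ≤ _ := by gcongr; linarith

end Plane

/-- Boundary-weighted `L¹` Poincaré-type inequality (Lemma 5.2, estimate (approx1)):
if `Γ` is a nondegenerate closed segment contained in the boundary of the bounded
convex open set `D ⊆ ℝ²` and `ψ` is a continuous weight with `ψ ≥ 0` on `Γ` and
`∫_Γ ψ dH¹ > 0`, then there is `C > 0` such that for every `C¹` function `w`,
`∫_D |w - e_Γ(w)| ≤ C·∫_D |∇w|`, where `e_Γ(w) = (∫_Γ w·ψ dH¹)/(∫_Γ ψ dH¹)`. -/
theorem boundary_weighted_poincare_L1
    (D : Set (EuclideanSpace ℝ (Fin 2)))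
    (hDo : IsOpen D) (hDb : Bornology.IsBounded D) (hDc : Convex ℝ D)
    (Γ : Set (EuclideanSpace ℝ (Fin 2)))
    (hseg : ∃ p q : EuclideanSpace ℝ (Fin 2), p ≠ q ∧ Γ = segment ℝ p q)
    (hΓD : Γ ⊆ frontier D)
    (ψ : EuclideanSpace ℝ (Fin 2) → ℝ) (hψc : Continuous ψ)
    (hψ0 : ∀ x ∈ Γ, 0 ≤ ψ x)
    (hψpos : 0 < ∫ x in Γ, ψ x ∂(μH[1])) :
    ∃ C > 0, ∀ w : EuclideanSpace ℝ (Fin 2) → ℝ, ContDiff ℝ 1 w →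
      (∫ x in D,
          |w x - (∫ y in Γ, w y * ψ y ∂(μH[1])) / ∫ y in Γ, ψ y ∂(μH[1])|) ≤
        C * ∫ x in D, ‖fderiv ℝ w x‖ := by
  obtain ⟨p, q, -, rfl⟩ := hseg
  simpa [weightedMean, div_eq_inv_mul, mul_comm] using
    boundary_weighted_poincare_L1_general (F := ℝ) volume (by simp) hDo hDb hDc
      (hΓD.trans frontier_subset_closure) (memLp_top_restrict_segment hψc.continuousOn _) hψpos.ne'
end

section
/- For every κ ≥ 1 and every p ∈ [1, ∞) there exists a constant C > 0, depending only on κ and p, such that for every nondegenerate triangle T ⊆ ℝ² whose diameter h_T and inradius ρ_T satisfy h_T ≤ κ·ρ_T, every edge e of T of length h_e, and every continuously differentiable function ψ : ℝ² → ℝ, one has ∫_e |ψ|^p dH¹ ≤ C·h_e^{−1}·( h_e^p·∫_T |∇ψ|^p dx + ∫_T |ψ|^p dx ), where H¹ is the one-dimensional Hausdorff measure on e. -/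
open MeasureTheory

/-- The inradius of a subset of the plane: the radius of its largest inscribed ball. -/
noncomputable def inradius (T : Set (EuclideanSpace ℝ (Fin 2))) : ℝ :=
  sSup {r : ℝ | ∃ c : EuclideanSpace ℝ (Fin 2), Metric.closedBall c r ⊆ T}

/-!
Each endpoint `a` of the edge `[a, b]` of the triangle `T = abc` spans with the half-edges
`u = (b - a) / 2` and `w = (c - a) / 2` a parallelogram contained in `T`. For `x` on the half-edge
along `u`, the fundamental theorem of calculus for `s ↦ (1 - s) ψ(x + s w)` and Jensen's inequality
bound `|ψ x| ^ p` by `2 ^ (p - 1)` times the average of `|ψ| ^ p + |w| ^ p |∇ψ| ^ p` over the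
segment from `x` to `x + w`; integrating in `x` turns the right-hand side into an integral over
the parallelogram, divided by its area. Shape regularity enters twice. With `D` twice the area of
`T`, `h` the length of the edge and `ρ` the inradius, the inscribed disc lies in a strip of width
`D / h`, so `2 ρ h ≤ D`; hence `h ^ 2` is at most a multiple of `D`. The same bound for the edge
`[a, c]`, combined with `D ≤ h |c - a|`, gives `2 ρ ≤ h`, so the diameter of `T` is at most a
multiple of `h`.
-/

open AffineMap (lineMap)
open Set Module

section Segment

variable {E F : Type*} [NormedAddCommGroup E] [NormedSpace ℝ E] [NormedAddCommGroup F]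
  [NormedSpace ℝ F]

lemma setIntegral_segment_hausdorffMeasure [MeasurableSpace E] [BorelSpace E] (a b : E)
    (f : E → F) :
    ∫ x in segment ℝ a b, f x ∂μH[1] = dist a b • ∫ t in 0..1, f (lineMap a b t) := by
  rcases eq_or_ne a b with rfl | hab
  · have hnull : μH[1] ({a} : Set E) = 0 := by simpa using hausdorffMeasure_segment a a
    simp [Measure.restrict_eq_zero.2 hnull]
  have hγ : MeasurableEmbedding (lineMap a b : ℝ →ᵃ[ℝ] E) :=
    Continuous.measurableEmbedding AffineMap.lineMap_continuous
      (AffineMap.lineMap_injective ℝ hab)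
  have hcomap : Measure.comap (lineMap a b : ℝ →ᵃ[ℝ] E) μH[1] = nndist a b • volume := by
    ext s -
    rw [hγ.comap_apply, hausdorffMeasure_lineMap_image, hausdorffMeasure_real,
      Measure.smul_apply]
  have hrestrict : (μH[1] : Measure E).restrict (segment ℝ a b) =
      ((Measure.comap (lineMap a b : ℝ →ᵃ[ℝ] E) μH[1]).map (lineMap a b : ℝ →ᵃ[ℝ] E)).restrict
        (segment ℝ a b) := by
    rw [hγ.map_comap, segment_eq_image_lineMap,
      Measure.restrict_restrict_of_subset (image_subset_range _ _)]
  rw [hrestrict, hγ.setIntegral_map, segment_eq_image_lineMap,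
    preimage_image_eq _ hγ.injective, hcomap, Measure.restrict_smul, integral_smul_nnreal_measure,
    integral_Icc_eq_integral_Ioc, ← intervalIntegral.integral_of_le zero_le_one]
  rfl

lemma integral_lineMap_eq_half_add_half {f : E → F} (hf : Continuous f) (a b : E) :
    ∫ t in 0..1, f (lineMap a b t) = (1 / 2 : ℝ) •
      ((∫ t in 0..1, f (lineMap a b (t / 2))) + ∫ t in 0..1, f (lineMap b a (t / 2))) := by
  set g : ℝ → F := fun t => f (lineMap a b t)
  have hg : Continuous g := by fun_prop
  have hfst : ∫ t in 0..1, g (t / 2) = (2 : ℝ) • ∫ t in 0..1 / 2, g t := by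
    simp [intervalIntegral.integral_comp_div]
  have hsnd : ∫ t in 0..1, g (1 - t / 2) = (2 : ℝ) • ∫ t in 1 / 2..1, g t := by
    rw [intervalIntegral.integral_comp_sub_div _ two_ne_zero]
    norm_num
  have hrev : ∀ t : ℝ, f (lineMap b a (t / 2)) = g (1 - t / 2) := fun t => by
    simp only [g, AffineMap.lineMap_apply_one_sub]
  simp only [hrev]
  rw [hfst, hsnd, ← smul_add, intervalIntegral.integral_add_adjacent_intervals
    (hg.intervalIntegrable _ _) (hg.intervalIntegrable _ _), smul_smul]
  norm_num

end Segment

section Trace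

lemma rpow_integral_le_integral_rpow {α : Type*} [MeasurableSpace α] {μ : Measure α}
    [IsProbabilityMeasure μ] {f : α → ℝ} {p : ℝ} (hp : 1 ≤ p) (hf0 : 0 ≤ᵐ[μ] f)
    (hf : Integrable f μ) (hfp : Integrable (fun x => f x ^ p) μ) :
    (∫ x, f x ∂μ) ^ p ≤ ∫ x, f x ^ p ∂μ :=
  (convexOn_rpow hp).map_integral_le
    (Real.continuous_rpow_const (zero_le_one.trans hp)).continuousOn isClosed_Ici hf0 hf hfp

lemma add_rpow_le_two_rpow_mul {a b p : ℝ} (ha : 0 ≤ a) (hb : 0 ≤ b) (hp : 1 ≤ p) :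
    (a + b) ^ p ≤ 2 ^ (p - 1) * (a ^ p + b ^ p) := by
  exact_mod_cast NNReal.rpow_add_le_mul_rpow_add_rpow ⟨a, ha⟩ ⟨b, hb⟩ hp

variable {E F : Type*} [NormedAddCommGroup E] [NormedSpace ℝ E] [NormedAddCommGroup F]
  [NormedSpace ℝ F]

lemma norm_apply_zero_le_integral {g : ℝ → F} (hg : ContDiff ℝ 1 g) :
    ‖g 0‖ ≤ ∫ s in 0..1, (‖g s‖ + ‖deriv g s‖) := by
  have hgc : Continuous g := hg.continuous
  have : Continuous (deriv g) := hg.continuous_deriv_one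
  have hderiv (s : ℝ) :
      HasDerivAt (fun s : ℝ => (1 - s) • g s) ((1 - s) • deriv g s + (-1 : ℝ) • g s) s :=
    ((hasDerivAt_id s).const_sub 1).smul (hg.differentiable_one s).hasDerivAt
  have hbound : ∀ s ∈ Ioo (0 : ℝ) 1,
      ‖deriv (fun s : ℝ => (1 - s) • g s) s‖ ≤ ‖g s‖ + ‖deriv g s‖ := fun s hs => by
    have hs1 : ‖1 - s‖ ≤ 1 := by
      rw [Real.norm_of_nonneg (sub_nonneg.2 hs.2.le)]
      exact sub_le_self 1 hs.1.le
    calc ‖deriv (fun s : ℝ => (1 - s) • g s) s‖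
        = ‖(1 - s) • deriv g s + (-1 : ℝ) • g s‖ := by rw [(hderiv s).deriv]
      _ ≤ ‖(1 - s) • deriv g s‖ + ‖(-1 : ℝ) • g s‖ := norm_add_le _ _
      _ = ‖g s‖ + ‖1 - s‖ * ‖deriv g s‖ := by simp [norm_smul, add_comm]
      _ ≤ ‖g s‖ + ‖deriv g s‖ := by gcongr; exact mul_le_of_le_one_left (norm_nonneg _) hs1
  simpa using norm_sub_le_integral_of_norm_deriv_le_of_le (f := fun s : ℝ => (1 - s) • g s)
    zero_le_one (by fun_prop) (fun s _ => (hderiv s).differentiableAt.differentiableWithinAt)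
    (.of_forall hbound) (Continuous.intervalIntegrable (by fun_prop) 0 1)

lemma norm_apply_zero_rpow_le_integral {g : ℝ → F} (hg : ContDiff ℝ 1 g) {p : ℝ} (hp : 1 ≤ p) :
    ‖g 0‖ ^ p ≤ 2 ^ (p - 1) * ∫ s in 0..1, (‖g s‖ ^ p + ‖deriv g s‖ ^ p) := by
  have hp0 : 0 ≤ p := zero_le_one.trans hp
  have : Continuous (deriv g) := hg.continuous_deriv_one
  have : IsProbabilityMeasure (volume.restrict (Ioc (0 : ℝ) 1)) := ⟨by simp⟩
  have hsum : Continuous fun s => ‖g s‖ + ‖deriv g s‖ := by fun_prop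
  have hsumpow : Continuous fun s => (‖g s‖ + ‖deriv g s‖) ^ p :=
    hsum.rpow_const fun _ => .inr hp0
  calc ‖g 0‖ ^ p ≤ (∫ s in 0..1, (‖g s‖ + ‖deriv g s‖)) ^ p :=
        Real.rpow_le_rpow (norm_nonneg _) (norm_apply_zero_le_integral hg) hp0
    _ ≤ ∫ s in 0..1, (‖g s‖ + ‖deriv g s‖) ^ p := by
        simp only [intervalIntegral.integral_of_le zero_le_one]
        exact rpow_integral_le_integral_rpow hp (.of_forall fun s => by positivity)
          hsum.integrableOn_Ioc hsumpow.integrableOn_Ioc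
    _ ≤ ∫ s in 0..1, 2 ^ (p - 1) * (‖g s‖ ^ p + ‖deriv g s‖ ^ p) := by
        refine intervalIntegral.integral_mono zero_le_one (hsumpow.intervalIntegrable 0 1)
          (Continuous.intervalIntegrable ?_ 0 1)
          fun s => add_rpow_le_two_rpow_mul (norm_nonneg _) (norm_nonneg _) hp
        fun_prop (disch := simp [hp0])
    _ = 2 ^ (p - 1) * ∫ s in 0..1, (‖g s‖ ^ p + ‖deriv g s‖ ^ p) :=
        intervalIntegral.integral_const_mul _ _

lemma continuous_norm_rpow_add_norm_fderiv_rpow {ψ : E → F} (hψ : ContDiff ℝ 1 ψ) {p : ℝ}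
    (hp : 0 ≤ p) (r : ℝ) : Continuous fun x => ‖ψ x‖ ^ p + r * ‖fderiv ℝ ψ x‖ ^ p := by
  have : Continuous (fderiv ℝ ψ) := hψ.continuous_fderiv one_ne_zero
  fun_prop (disch := simp [hp])

lemma norm_rpow_le_integral_ray {ψ : E → F} (hψ : ContDiff ℝ 1 ψ) {p : ℝ} (hp : 1 ≤ p)
    (x w : E) :
    ‖ψ x‖ ^ p ≤ 2 ^ (p - 1) *
      ∫ s in 0..1, (‖ψ (x + s • w)‖ ^ p + ‖w‖ ^ p * ‖fderiv ℝ ψ (x + s • w)‖ ^ p) := by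
  have hp0 : 0 ≤ p := zero_le_one.trans hp
  set g : ℝ → F := fun s => ψ (x + s • w)
  have hg : ContDiff ℝ 1 g := by fun_prop
  have : Continuous (deriv g) := hg.continuous_deriv_one
  have hderiv (s : ℝ) : ‖deriv g s‖ ≤ ‖w‖ * ‖fderiv ℝ ψ (x + s • w)‖ := by
    have hline : HasDerivAt (fun s : ℝ => x + s • w) w s := by
      simpa using ((hasDerivAt_id s).smul_const w).const_add x
    have hg_deriv : deriv g s = fderiv ℝ ψ (x + s • w) w :=
      ((hψ.differentiable one_ne_zero _).hasFDerivAt.comp_hasDerivAt s hline).deriv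
    rw [hg_deriv, mul_comm]
    exact (fderiv ℝ ψ (x + s • w)).le_opNorm w
  have hcont := continuous_norm_rpow_add_norm_fderiv_rpow hψ hp0 (‖w‖ ^ p)
  calc ‖ψ x‖ ^ p = ‖g 0‖ ^ p := by simp [g]
    _ ≤ 2 ^ (p - 1) * ∫ s in 0..1, (‖g s‖ ^ p + ‖deriv g s‖ ^ p) :=
        norm_apply_zero_rpow_le_integral hg hp
    _ ≤ _ := by
        gcongr
        refine intervalIntegral.integral_mono zero_le_one
          (Continuous.intervalIntegrable (by fun_prop (disch := simp [hp0])) 0 1)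
          (Continuous.intervalIntegrable (hcont.comp (by fun_prop)) 0 1) fun s => ?_
        beta_reduce
        rw [← Real.mul_rpow (norm_nonneg _) (norm_nonneg _)]
        gcongr
        exact hderiv s

end Trace

section Parallelogram

lemma setIntegral_parallelepiped {ι E F : Type*} [Fintype ι] [NormedAddCommGroup E]
    [NormedSpace ℝ E] [MeasurableSpace E] [BorelSpace E] [NormedAddCommGroup F] [NormedSpace ℝ F]
    (μ : Measure E) [μ.IsAddHaarMeasure] (b : Basis ι ℝ E) (f : E → F) :
    ∫ x in parallelepiped b, f x ∂μ =
      μ.real (parallelepiped b) • ∫ t in Icc (0 : ι → ℝ) 1, f (∑ i, t i • b i) := by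
  have : FiniteDimensional ℝ E := b.finiteDimensional_of_finite
  have hμ : μ = μ (parallelepiped b) • b.addHaar := by
    conv_lhs => rw [Measure.addHaarMeasure_unique μ b.parallelepiped]
    rw [Basis.addHaar_def, Basis.coe_parallelepiped]
  have hmap : b.addHaar = volume.map b.equivFunL.symm := by
    rw [← addHaarMeasure_eq_volume_pi, ← Basis.parallelepiped_basisFun, ← Basis.addHaar_def,
      Basis.map_addHaar]
    congr
    ext i
    classical
    simp [Basis.equivFunL, Pi.single_apply]
  have hemb : MeasurableEmbedding b.equivFunL.symm :=
    b.equivFunL.symm.toHomeomorph.measurableEmbedding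
  have hsum (t : ι → ℝ) : b.equivFunL.symm t = ∑ i, t i • b i := b.equivFun_symm_apply t
  have himage : parallelepiped b = b.equivFunL.symm '' Icc 0 1 := by
    simp only [parallelepiped, hsum]
  conv_lhs => rw [hμ, Measure.restrict_smul, integral_smul_measure, hmap, himage,
    hemb.setIntegral_map, preimage_image_eq _ hemb.injective]
  simp only [hsum, himage, Measure.real]

lemma setIntegral_Icc_fin_two {F : Type*} [NormedAddCommGroup F] [NormedSpace ℝ F]
    {g : ℝ → ℝ → F} (hg : Continuous (Function.uncurry g)) :
    ∫ t in Icc (0 : Fin 2 → ℝ) 1, g (t 0) (t 1) = ∫ t in 0..1, ∫ s in 0..1, g t s := by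
  have hpreimage : Icc (0 : Fin 2 → ℝ) 1 =
      MeasurableEquiv.finTwoArrow ⁻¹' (Icc (0 : ℝ) 1 ×ˢ Icc (0 : ℝ) 1) := by
    ext t
    simp [Pi.le_def, Fin.forall_fin_two, MeasurableEquiv.finTwoArrow, and_and_and_comm]
  have hint : IntegrableOn (Function.uncurry g) (Icc (0 : ℝ) 1 ×ˢ Icc (0 : ℝ) 1) :=
    hg.continuousOn.integrableOn_compact (isCompact_Icc.prod isCompact_Icc)
  calc ∫ t in Icc (0 : Fin 2 → ℝ) 1, g (t 0) (t 1)
      = ∫ q in Icc (0 : ℝ) 1 ×ˢ Icc (0 : ℝ) 1, Function.uncurry g q := by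
        rw [hpreimage, ← (volume_preserving_finTwoArrow ℝ).setIntegral_preimage_emb
          MeasurableEquiv.finTwoArrow.measurableEmbedding]
        rfl
    _ = ∫ t in 0..1, ∫ s in 0..1, g t s := by
        rw [Measure.volume_eq_prod, setIntegral_prod _ hint]
        simp only [intervalIntegral.integral_of_le zero_le_one, integral_Icc_eq_integral_Ioc,
          Function.uncurry_apply_pair]

variable {E : Type*} [NormedAddCommGroup E] [InnerProductSpace ℝ E] [Fact (finrank ℝ E = 2)]
  (o : Orientation ℝ E (Fin 2))

section Measure

variable [MeasurableSpace E] [BorelSpace E]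

attribute [local instance] FiniteDimensional.of_fact_finrank_eq_two

lemma volume_parallelepiped_pair (u w : E) :
    volume (parallelepiped ![u, w]) = ENNReal.ofReal |o.areaForm u w| := by
  rw [← o.measure_eq_volume, AlternatingMap.measure_parallelepiped, o.areaForm_to_volumeForm]

lemma setIntegral_parallelepiped_pair {F : Type*} [NormedAddCommGroup F] [NormedSpace ℝ F]
    {f : E → F} (hf : Continuous f) (u w : E) :
    ∫ x in parallelepiped ![u, w], f x =
      |o.areaForm u w| • ∫ t in 0..1, ∫ s in 0..1, f (t • u + s • w) := by
  rcases eq_or_ne (o.areaForm u w) 0 with hω | hω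
  · rw [Measure.restrict_eq_zero.2 (by simp [volume_parallelepiped_pair o, hω])]
    simp [hω]
  obtain ⟨b, hb⟩ : ∃ b : Basis (Fin 2) ℝ E, ⇑b = ![u, w] := by
    have hli : LinearIndependent ℝ ![u, w] := by
      by_contra h
      exact hω (o.areaForm_to_volumeForm u w ▸ o.volumeForm.map_linearDependent _ h)
    exact ⟨basisOfLinearIndependentOfCardEqFinrank hli
      (by rw [Fintype.card_fin, (Fact.out : finrank ℝ E = 2)]), by simp⟩
  have h := setIntegral_parallelepiped volume b f
  simp only [hb, Measure.real, volume_parallelepiped_pair o, Fin.sum_univ_two,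
    Matrix.cons_val_zero, Matrix.cons_val_one, ENNReal.toReal_ofReal (abs_nonneg _)] at h
  rw [h, ← setIntegral_Icc_fin_two (by fun_prop)]

lemma abs_areaForm_mul_integral_le_setIntegral {f : E → ℝ} (hf : Continuous f) (hf0 : 0 ≤ f)
    {K : Set E} (hK : IsCompact K) {a u w : E}
    (hsub : MapsTo (a + ·) (parallelepiped ![u, w]) K) :
    |o.areaForm u w| * ∫ t in 0..1, ∫ s in 0..1, f (a + t • u + s • w) ≤ ∫ x in K, f x := by
  calc |o.areaForm u w| * ∫ t in 0..1, ∫ s in 0..1, f (a + t • u + s • w)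
      = ∫ x in parallelepiped ![u, w], f (a + x) := by
        rw [setIntegral_parallelepiped_pair o (by fun_prop : Continuous fun x => f (a + x)),
          smul_eq_mul]
        simp only [add_assoc]
    _ = ∫ x in (a + ·) '' parallelepiped ![u, w], f x :=
        ((measurePreserving_add_left volume a).setIntegral_image_emb
          (measurableEmbedding_addLeft a) f _).symm
    _ ≤ ∫ x in K, f x :=
        setIntegral_mono_set (hf.continuousOn.integrableOn_compact hK) (.of_forall hf0)
          hsub.image_subset.eventuallyLE

end Measure

lemma abs_areaForm_sub_sub_swap_left (a b c : E) :
    |o.areaForm (a - b) (c - b)| = |o.areaForm (b - a) (c - a)| := by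
  rw [← abs_neg]
  congr 1
  simp only [map_sub, LinearMap.sub_apply, o.areaForm_apply_self, o.areaForm_swap b a]
  ring

lemma two_mul_radius_mul_dist_le_abs_areaForm {a b c z : E} {r : ℝ}
    (h : Metric.closedBall z r ⊆ convexHull ℝ {a, b, c}) :
    2 * r * dist a b ≤ |o.areaForm (b - a) (c - a)| := by
  rcases lt_or_ge r 0 with hr | hr
  · exact (mul_nonpos_of_nonpos_of_nonneg (by linarith) dist_nonneg).trans (abs_nonneg _)
  rcases eq_or_ne a b with rfl | hab
  · simp
  set u := b - a with hu
  have hu0 : 0 < ‖u‖ := norm_pos_iff.2 (sub_ne_zero.2 hab.symm)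
  have hstrip :
      o.areaForm u '' convexHull ℝ {a, b, c} = uIcc (o.areaForm u a) (o.areaForm u c) := by
    have hub : o.areaForm u b = o.areaForm u a := by
      rw [← sub_eq_zero, ← map_sub, ← hu, o.areaForm_apply_self]
    rw [(o.areaForm u).isLinear.image_convexHull, image_insert_eq, image_pair, hub, insert_idem,
      convexHull_pair, segment_eq_uIcc]
  set n := (r / ‖u‖) • o.rightAngleRotation u with hn
  have hnorm : ‖n‖ = r := by
    rw [hn, norm_smul, LinearIsometryEquiv.norm_map, Real.norm_of_nonneg (by positivity),
      div_mul_cancel₀ _ hu0.ne']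
  have hwidth : o.areaForm u (z + n) - o.areaForm u (z - n) = 2 * r * ‖u‖ := by
    rw [← map_sub, add_sub_sub_cancel, ← two_smul ℝ n, hn, map_smul, map_smul,
      o.areaForm_rightAngleRotation_right, real_inner_self_eq_norm_sq, smul_eq_mul, smul_eq_mul]
    field_simp
  have hmem {x : E} (hx : ‖x - z‖ ≤ r) : o.areaForm u x ∈ uIcc (o.areaForm u a) (o.areaForm u c) :=
    hstrip ▸ mem_image_of_mem _ (h (mem_closedBall_iff_norm.2 hx))
  calc 2 * r * dist a b = o.areaForm u (z + n) - o.areaForm u (z - n) := by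
        rw [hwidth, dist_comm, dist_eq_norm]
    _ ≤ |o.areaForm u c - o.areaForm u a| :=
        (le_abs_self _).trans (abs_sub_le_of_uIcc_subset_uIcc
          (uIcc_subset_uIcc (hmem (by simp [hnorm])) (hmem (by simp [hnorm]))))
    _ = |o.areaForm u (c - a)| := by rw [map_sub (o.areaForm u)]

end Parallelogram

section Triangle

lemma mapsTo_add_half_parallelepiped_convexHull {E : Type*} [AddCommGroup E] [Module ℝ E]
    (a b c : E) :
    MapsTo (a + ·) (parallelepiped ![(1 / 2 : ℝ) • (b - a), (1 / 2 : ℝ) • (c - a)])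
      (convexHull ℝ {a, b, c}) := by
  intro x hx
  obtain ⟨t, ⟨ht0, ht1⟩, rfl⟩ := (mem_parallelepiped_iff _ _).1 hx
  have hconv := convex_convexHull ℝ ({a, b, c} : Set E)
  have ha : a ∈ convexHull ℝ {a, b, c} := subset_convexHull ℝ _ (by simp)
  have hab := hconv ha (subset_convexHull ℝ _ (by simp : b ∈ {a, b, c}))
    (sub_nonneg.2 (ht1 0)) (ht0 0) (sub_add_cancel _ _)
  have hac := hconv ha (subset_convexHull ℝ _ (by simp : c ∈ {a, b, c}))
    (sub_nonneg.2 (ht1 1)) (ht0 1) (sub_add_cancel _ _)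
  convert hconv hab hac one_half_pos.le one_half_pos.le (add_halves 1) using 1
  simp only [Fin.sum_univ_two, Matrix.cons_val_zero, Matrix.cons_val_one, Pi.one_apply]
  module

variable {E F : Type*} [NormedAddCommGroup E] [InnerProductSpace ℝ E] [Fact (finrank ℝ E = 2)]
  [MeasurableSpace E] [BorelSpace E] [NormedAddCommGroup F] [NormedSpace ℝ F]
  (o : Orientation ℝ E (Fin 2))

attribute [local instance] FiniteDimensional.of_fact_finrank_eq_two

lemma abs_areaForm_mul_integral_norm_rpow_le {ψ : E → F} (hψ : ContDiff ℝ 1 ψ) {p : ℝ}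
    (hp : 1 ≤ p) {K : Set E} (hK : IsCompact K) {a u w : E}
    (hsub : MapsTo (a + ·) (parallelepiped ![u, w]) K) :
    |o.areaForm u w| * ∫ t in 0..1, ‖ψ (a + t • u)‖ ^ p ≤
      2 ^ (p - 1) * ((∫ x in K, ‖ψ x‖ ^ p) + ‖w‖ ^ p * ∫ x in K, ‖fderiv ℝ ψ x‖ ^ p) := by
  have hp0 : 0 ≤ p := zero_le_one.trans hp
  have hψc : Continuous ψ := hψ.continuous
  have : Continuous (fderiv ℝ ψ) := hψ.continuous_fderiv one_ne_zero
  have hψp : Continuous fun x => ‖ψ x‖ ^ p := by fun_prop (disch := simp [hp0])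
  have hψp' : Continuous fun x => ‖fderiv ℝ ψ x‖ ^ p := by fun_prop (disch := simp [hp0])
  set f : E → ℝ := fun x => ‖ψ x‖ ^ p + ‖w‖ ^ p * ‖fderiv ℝ ψ x‖ ^ p
  have hf : Continuous f := hψp.add (hψp'.const_mul _)
  have hinner : Continuous fun t : ℝ => ∫ s in 0..1, f (a + t • u + s • w) :=
    intervalIntegral.continuous_parametric_intervalIntegral_of_continuous'
      (by unfold Function.uncurry; fun_prop) 0 1
  calc |o.areaForm u w| * ∫ t in 0..1, ‖ψ (a + t • u)‖ ^ p
      ≤ |o.areaForm u w| * ∫ t in 0..1, 2 ^ (p - 1) * ∫ s in 0..1, f (a + t • u + s • w) := by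
        gcongr
        exact intervalIntegral.integral_mono zero_le_one
          (Continuous.intervalIntegrable (by fun_prop) 0 1)
          ((hinner.const_mul _).intervalIntegrable 0 1)
          fun t => norm_rpow_le_integral_ray hψ hp (a + t • u) w
    _ = 2 ^ (p - 1) *
          (|o.areaForm u w| * ∫ t in 0..1, ∫ s in 0..1, f (a + t • u + s • w)) := by
        rw [intervalIntegral.integral_const_mul, mul_left_comm]
    _ ≤ 2 ^ (p - 1) * ∫ x in K, f x := by
        gcongr
        exact abs_areaForm_mul_integral_le_setIntegral o hf (fun x => by positivity) hK hsub
    _ = _ := by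
        rw [integral_add (hψp.continuousOn.integrableOn_compact hK)
          ((hψp'.continuousOn.integrableOn_compact hK).const_mul _), integral_const_mul]

lemma abs_areaForm_mul_integral_half_edge_le {ψ : E → F} (hψ : ContDiff ℝ 1 ψ) {p : ℝ}
    (hp : 1 ≤ p) (a b c : E) :
    |o.areaForm (b - a) (c - a)| * ∫ t in 0..1, ‖ψ (lineMap a b (t / 2))‖ ^ p ≤
      2 ^ (p + 1) * ((∫ x in convexHull ℝ {a, b, c}, ‖ψ x‖ ^ p) +
        dist a c ^ p * ∫ x in convexHull ℝ {a, b, c}, ‖fderiv ℝ ψ x‖ ^ p) := by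
  set T := convexHull ℝ {a, b, c}
  set u := (1 / 2 : ℝ) • (b - a) with hu
  set w := (1 / 2 : ℝ) • (c - a) with hw
  have hT : IsCompact T := (toFinite {a, b, c}).isCompact_convexHull ℝ
  have harea : |o.areaForm (b - a) (c - a)| = 4 * |o.areaForm u w| := by
    rw [hu, hw, map_smul, map_smul, LinearMap.smul_apply, smul_smul, smul_eq_mul, abs_mul,
      ← mul_assoc]
    norm_num
  have hpath (t : ℝ) : lineMap a b (t / 2) = a + t • u := by
    rw [AffineMap.lineMap_apply_module']
    module
  have hwle : ‖w‖ ≤ dist a c := by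
    rw [norm_smul, ← dist_eq_norm, dist_comm, Real.norm_of_nonneg one_half_pos.le]
    exact mul_le_of_le_one_left dist_nonneg one_half_lt_one.le
  have hpow : (2 : ℝ) ^ (p + 1) = 4 * 2 ^ (p - 1) := by
    rw [Real.rpow_add_one two_ne_zero, Real.rpow_sub_one two_ne_zero]
    ring
  calc |o.areaForm (b - a) (c - a)| * ∫ t in 0..1, ‖ψ (lineMap a b (t / 2))‖ ^ p
      = 4 * (|o.areaForm u w| * ∫ t in 0..1, ‖ψ (a + t • u)‖ ^ p) := by
        simp only [harea, hpath, mul_assoc]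
    _ ≤ 4 * (2 ^ (p - 1) * ((∫ x in T, ‖ψ x‖ ^ p) + ‖w‖ ^ p * ∫ x in T, ‖fderiv ℝ ψ x‖ ^ p)) := by
        gcongr 4 * ?_
        exact abs_areaForm_mul_integral_norm_rpow_le o hψ hp hT
          (mapsTo_add_half_parallelepiped_convexHull a b c)
    _ ≤ 2 ^ (p + 1) * ((∫ x in T, ‖ψ x‖ ^ p) + dist a c ^ p * ∫ x in T, ‖fderiv ℝ ψ x‖ ^ p) := by
        rw [hpow, ← mul_assoc]
        gcongr

lemma abs_areaForm_mul_setIntegral_segment_le {ψ : E → F} (hψ : ContDiff ℝ 1 ψ) {p : ℝ}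
    (hp : 1 ≤ p) (a b c : E) :
    |o.areaForm (b - a) (c - a)| * ∫ x in segment ℝ a b, ‖ψ x‖ ^ p ∂μH[1] ≤
      2 ^ (p + 1) * dist a b * ((∫ x in convexHull ℝ {a, b, c}, ‖ψ x‖ ^ p) +
        Metric.diam (convexHull ℝ {a, b, c}) ^ p *
          ∫ x in convexHull ℝ {a, b, c}, ‖fderiv ℝ ψ x‖ ^ p) := by
  have hcont : Continuous fun x => ‖ψ x‖ ^ p :=
    hψ.continuous.norm.rpow_const fun _ => .inr (zero_le_one.trans hp)
  have hbound : Bornology.IsBounded (convexHull ℝ {a, b, c}) :=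
    ((toFinite {a, b, c}).isCompact_convexHull ℝ).isBounded
  have hac : dist a c ≤ Metric.diam (convexHull ℝ {a, b, c}) :=
    Metric.dist_le_diam_of_mem hbound (subset_convexHull ℝ _ (by simp))
      (subset_convexHull ℝ _ (by simp))
  have hbc : dist b c ≤ Metric.diam (convexHull ℝ {a, b, c}) :=
    Metric.dist_le_diam_of_mem hbound (subset_convexHull ℝ _ (by simp))
      (subset_convexHull ℝ _ (by simp))
  have hfst := abs_areaForm_mul_integral_half_edge_le o hψ hp a b c
  have hsnd := abs_areaForm_mul_integral_half_edge_le o hψ hp b a c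
  rw [abs_areaForm_sub_sub_swap_left, insert_comm b a] at hsnd
  rw [setIntegral_segment_hausdorffMeasure, integral_lineMap_eq_half_add_half hcont, smul_eq_mul,
    smul_eq_mul]
  set A := ∫ x in convexHull ℝ {a, b, c}, ‖ψ x‖ ^ p
  set B := ∫ x in convexHull ℝ {a, b, c}, ‖fderiv ℝ ψ x‖ ^ p
  set d := Metric.diam (convexHull ℝ {a, b, c})
  set D := |o.areaForm (b - a) (c - a)|
  calc _ = dist a b * ((D * (∫ t in 0..1, ‖ψ (lineMap a b (t / 2))‖ ^ p) +
          D * ∫ t in 0..1, ‖ψ (lineMap b a (t / 2))‖ ^ p) / 2) := by ring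
    _ ≤ dist a b * ((2 ^ (p + 1) * (A + d ^ p * B) + 2 ^ (p + 1) * (A + d ^ p * B)) / 2) := by
        gcongr dist a b * ((?_ + ?_) / 2)
        · exact hfst.trans (by gcongr)
        · exact hsnd.trans (by gcongr)
    _ = 2 ^ (p + 1) * dist a b * (A + d ^ p * B) := by ring

end Triangle

section ShapeRegular

open scoped EuclideanSpace

lemma two_mul_inradius_mul_dist_le_abs_areaForm
    (o : Orientation ℝ (EuclideanSpace ℝ (Fin 2)) (Fin 2)) (a b c : EuclideanSpace ℝ (Fin 2)) :
    2 * inradius (convexHull ℝ {a, b, c}) * dist a b ≤ |o.areaForm (b - a) (c - a)| := by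
  rcases eq_or_ne a b with rfl | hab
  · simp
  have hab' : 0 < 2 * dist a b := mul_pos two_pos (dist_pos.2 hab)
  have hradius : inradius (convexHull ℝ {a, b, c}) ≤
      |o.areaForm (b - a) (c - a)| / (2 * dist a b) := by
    refine Real.sSup_le ?_ (by positivity)
    rintro r ⟨z, hz⟩
    rw [le_div_iff₀ hab', mul_left_comm, ← mul_assoc]
    exact two_mul_radius_mul_dist_le_abs_areaForm o hz
  rwa [le_div_iff₀ hab', mul_left_comm, ← mul_assoc] at hradius

lemma two_mul_inradius_le_dist {a c : EuclideanSpace ℝ (Fin 2)} (hac : a ≠ c)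
    (b : EuclideanSpace ℝ (Fin 2)) :
    2 * inradius (convexHull ℝ {a, b, c}) ≤ dist a b := by
  have o := (EuclideanSpace.basisFun (Fin 2) ℝ).toBasis.orientation
  refine le_of_mul_le_mul_right ?_ (dist_pos.2 hac)
  calc 2 * inradius (convexHull ℝ {a, b, c}) * dist a c
      ≤ |o.areaForm (c - a) (b - a)| := by
        rw [pair_comm b c]
        exact two_mul_inradius_mul_dist_le_abs_areaForm o a c b
    _ ≤ dist a b * dist a c := by
        rw [mul_comm, dist_comm a c, dist_comm a b, dist_eq_norm, dist_eq_norm]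
        exact o.abs_areaForm_le _ _

lemma two_mul_dist_sq_le_of_diam_le {κ : ℝ} (hκ : 0 ≤ κ)
    (o : Orientation ℝ (EuclideanSpace ℝ (Fin 2)) (Fin 2)) {a b c : EuclideanSpace ℝ (Fin 2)}
    (hT : Metric.diam (convexHull ℝ {a, b, c}) ≤ κ * inradius (convexHull ℝ {a, b, c})) :
    2 * dist a b ^ 2 ≤ κ * |o.areaForm (b - a) (c - a)| := by
  have hdiam : dist a b ≤ Metric.diam (convexHull ℝ {a, b, c}) :=
    Metric.dist_le_diam_of_mem ((toFinite {a, b, c}).isCompact_convexHull ℝ).isBounded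
      (subset_convexHull ℝ _ (by simp)) (subset_convexHull ℝ _ (by simp))
  calc 2 * dist a b ^ 2 = 2 * dist a b * dist a b := by ring
    _ ≤ 2 * (κ * inradius (convexHull ℝ {a, b, c})) * dist a b := by
        gcongr
        exact hdiam.trans hT
    _ = κ * (2 * inradius (convexHull ℝ {a, b, c}) * dist a b) := by ring
    _ ≤ κ * |o.areaForm (b - a) (c - a)| := by
        gcongr
        exact two_mul_inradius_mul_dist_le_abs_areaForm o a b c

lemma diam_le_mul_dist_of_diam_le {κ : ℝ} (hκ : 0 ≤ κ) {a b c : EuclideanSpace ℝ (Fin 2)}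
    (hac : a ≠ c)
    (hT : Metric.diam (convexHull ℝ {a, b, c}) ≤ κ * inradius (convexHull ℝ {a, b, c})) :
    Metric.diam (convexHull ℝ {a, b, c}) ≤ κ * dist a b := by
  refine hT.trans (mul_le_mul_of_nonneg_left ?_ hκ)
  linarith [two_mul_inradius_le_dist hac b, dist_nonneg (x := a) (y := b)]

variable {F : Type*} [NormedAddCommGroup F] [NormedSpace ℝ F]

lemma setIntegral_segment_norm_rpow_le {κ p : ℝ} (hκ : 1 ≤ κ) (hp : 1 ≤ p)
    {a b c : EuclideanSpace ℝ (Fin 2)} (hab : a ≠ b) (hac : a ≠ c)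
    (hT : Metric.diam (convexHull ℝ {a, b, c}) ≤ κ * inradius (convexHull ℝ {a, b, c}))
    {ψ : EuclideanSpace ℝ (Fin 2) → F} (hψ : ContDiff ℝ 1 ψ) :
    ∫ x in segment ℝ a b, ‖ψ x‖ ^ p ∂μH[1] ≤
      2 ^ p * κ ^ (p + 1) * (dist a b)⁻¹ *
        (dist a b ^ p * (∫ x in convexHull ℝ {a, b, c}, ‖fderiv ℝ ψ x‖ ^ p) +
          ∫ x in convexHull ℝ {a, b, c}, ‖ψ x‖ ^ p) := by
  have o := (EuclideanSpace.basisFun (Fin 2) ℝ).toBasis.orientation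
  have hp0 : 0 ≤ p := zero_le_one.trans hp
  have hκ0 : 0 < κ := zero_lt_one.trans_le hκ
  have hh : 0 < dist a b := dist_pos.2 hab
  have htrace := abs_areaForm_mul_setIntegral_segment_le o hψ hp a b c
  have harea := two_mul_dist_sq_le_of_diam_le hκ0.le o hT
  have hdiam : Metric.diam (convexHull ℝ {a, b, c}) ^ p ≤ κ ^ p * dist a b ^ p := by
    rw [← Real.mul_rpow hκ0.le hh.le]
    exact Real.rpow_le_rpow Metric.diam_nonneg (diam_le_mul_dist_of_diam_le hκ0.le hac hT) hp0
  have hA : 0 ≤ ∫ x in convexHull ℝ {a, b, c}, ‖ψ x‖ ^ p :=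
    integral_nonneg fun x => by positivity
  set A := ∫ x in convexHull ℝ {a, b, c}, ‖ψ x‖ ^ p
  set B := ∫ x in convexHull ℝ {a, b, c}, ‖fderiv ℝ ψ x‖ ^ p
  set I := ∫ x in segment ℝ a b, ‖ψ x‖ ^ p ∂μH[1]
  set h := dist a b
  have hscaled : 2 * h ^ 2 * I ≤ 2 * h ^ 2 * (2 ^ p * κ ^ (p + 1) * h⁻¹ * (h ^ p * B + A)) := by
    calc 2 * h ^ 2 * I ≤ κ * |o.areaForm (b - a) (c - a)| * I := by gcongr
      _ ≤ κ * (2 ^ (p + 1) * h * (A + Metric.diam (convexHull ℝ {a, b, c}) ^ p * B)) := by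
          rw [mul_assoc]
          gcongr
      _ ≤ κ * (2 ^ (p + 1) * h * (κ ^ p * A + κ ^ p * h ^ p * B)) := by
          gcongr
          exact le_mul_of_one_le_left hA (Real.one_le_rpow hκ hp0)
      _ = 2 * h ^ 2 * (2 ^ p * κ ^ (p + 1) * h⁻¹ * (h ^ p * B + A)) := by
          rw [Real.rpow_add_one two_ne_zero, Real.rpow_add_one hκ0.ne']
          field_simp
          ring
  exact le_of_mul_le_mul_left hscaled (by positivity)

lemma exists_range_eq_triple {α : Type*} (v : Fin 3 → α) {i j : Fin 3} (hij : i ≠ j) :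
    ∃ k, i ≠ k ∧ range v = {v i, v j, v k} := by
  obtain ⟨k, hik, huniv⟩ : ∃ k, i ≠ k ∧ (Finset.univ : Finset (Fin 3)) = {i, j, k} := by
    revert i j
    decide
  refine ⟨k, hik, ?_⟩
  rw [← image_univ, ← Finset.coe_univ, huniv]
  simp [image_insert_eq]

theorem scaled_trace_inequality_general {κ p : ℝ} (hκ : 1 ≤ κ) (hp : 1 ≤ p)
    {v : Fin 3 → EuclideanSpace ℝ (Fin 2)} (hv : AffineIndependent ℝ v)
    (hT : Metric.diam (convexHull ℝ (range v)) ≤ κ * inradius (convexHull ℝ (range v)))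
    {i j : Fin 3} (hij : i ≠ j) {ψ : EuclideanSpace ℝ (Fin 2) → F} (hψ : ContDiff ℝ 1 ψ) :
    ∫ x in segment ℝ (v i) (v j), ‖ψ x‖ ^ p ∂μH[1] ≤
      2 ^ p * κ ^ (p + 1) * (dist (v i) (v j))⁻¹ *
        (dist (v i) (v j) ^ p * (∫ x in convexHull ℝ (range v), ‖fderiv ℝ ψ x‖ ^ p) +
          ∫ x in convexHull ℝ (range v), ‖ψ x‖ ^ p) := by
  obtain ⟨k, hik, hrange⟩ := exists_range_eq_triple v hij
  rw [hrange] at hT ⊢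
  exact setIntegral_segment_norm_rpow_le hκ hp (hv.injective.ne hij) (hv.injective.ne hik) hT hψ

end ShapeRegular

/-- Scaled trace inequality (Lemma 3.4): for `κ ≥ 1` and `p ∈ [1, ∞)` there is
`C > 0` such that for every shape-regular triangle `T` (`h_T ≤ κ·ρ_T`), every edge
`e` of `T` of length `h_e`, and every `C¹` function `ψ`,
`∫_e |ψ|^p dH¹ ≤ C·h_e⁻¹·(h_e^p·∫_T |∇ψ|^p + ∫_T |ψ|^p)`. -/
theorem scaled_trace_inequality
    (κ : ℝ) (hκ : 1 ≤ κ) (p : ℝ) (hp : 1 ≤ p) :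
    ∃ C > 0,
      ∀ v : Fin 3 → EuclideanSpace ℝ (Fin 2), AffineIndependent ℝ v →
        Metric.diam (convexHull ℝ (Set.range v)) ≤
          κ * inradius (convexHull ℝ (Set.range v)) →
        ∀ i j : Fin 3, i ≠ j →
          ∀ ψ : EuclideanSpace ℝ (Fin 2) → ℝ, ContDiff ℝ 1 ψ →
            (∫ x in segment ℝ (v i) (v j), |ψ x| ^ p ∂(μH[1])) ≤
              C * (dist (v i) (v j))⁻¹ *
                (dist (v i) (v j) ^ p *
                    (∫ x in convexHull ℝ (Set.range v), ‖fderiv ℝ ψ x‖ ^ p) +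
                  ∫ x in convexHull ℝ (Set.range v), |ψ x| ^ p) :=
  ⟨2 ^ p * κ ^ (p + 1), by positivity, fun v hv hT i j hij ψ hψ =>
    scaled_trace_inequality_general hκ hp hv hT hij hψ⟩
end
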